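/- arXiv:2007.00399 — 5 statements merged into one kernel-verified Lean document; each statement's English description precedes it below -/
import Mathlib

section
/- The function f is differentiable on ℝ^d and for every θ ∈ ℝ^d its gradient is ∇f(θ) = α(σ_θ)·H·(θ − θ*). -/
/-!
For `v = θ - θ*` the residual is `⟨-v, x⟩ + ε + b`, and by independence its law is the convolution
of the law `ν` of `b` with `N(0, V)`, `V = σ² + ⟨v, H v⟩`. So `f(θ)` depends on `θ` only through
`V`. Since `t ↦ |t|` has second derivative `2 δ₀`, the heat equation `∂_V N(0, V) = ½ N(0, V)''`
suggests that the `V`-derivative of `∫ |t| d(ν ∗ N(0, V))` is the value at `0` of the density of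
`ν ∗ N(0, V)`, that is `∫ φ_V dν` with `φ_V` the density of `N(0, V)`. As `α(σ_θ) = 2 ∫ φ_V dν` and
`∇_θ V = 2 H v`, the chain rule gives the gradient.

To prove the formula for the `V`-derivative, write `N(0, V)` as the law of `√V Z` with `Z` standard
Gaussian and differentiate `E |b + √V Z|` under the expectation: the sign of `b + √V Z` appears, and
integrating it against `z φ₁(z) = -φ₁'(z)` leaves twice the density at the point of sign change.
-/

open MeasureTheory ProbabilityTheory Real
open scoped RealInnerProductSpace ENNReal

noncomputable section

/-- Euclidean space `ℝ^d`. -/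
abbrev Vec (d : ℕ) := EuclideanSpace ℝ (Fin d)

/-- The expected `ℓ¹` loss `f(θ) = E |y - ⟨x, θ⟩|` where `y = ⟨x, θ*⟩ + ε + b`. -/
noncomputable def fLoss {d : ℕ} {Ω : Type} [MeasurableSpace Ω] (P : Measure Ω)
    (x : Ω → Vec d) (ε b : Ω → ℝ) (θs θ : Vec d) : ℝ :=
  ∫ ω, |⟪x ω, θs⟫ + ε ω + b ω - ⟪x ω, θ⟫| ∂P

/-- `σ_θ = ‖θ - θ*‖_H = √⟨θ - θ*, H (θ - θ*)⟩`. -/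
noncomputable def sigTh {d : ℕ} (H : Matrix (Fin d) (Fin d) ℝ) (θs θ : Vec d) : ℝ :=
  Real.sqrt ⟪θ - θs, Matrix.toEuclideanLin H (θ - θs)⟫

/-- The effective outlier proportion `η̃ = 1 - E[exp (-b² / (2σ²))]`. -/
noncomputable def etaT {Ω : Type} [MeasurableSpace Ω] (P : Measure Ω) (b : Ω → ℝ)
    (σ : ℝ) : ℝ :=
  1 - ∫ ω, Real.exp (-(b ω) ^ 2 / (2 * σ ^ 2)) ∂P

/-- `α(z) = √(2/π) · (σ² + z²)^(-1/2) · E[exp (-b² / (2 (σ² + z²)))]`. -/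
noncomputable def alphaF {Ω : Type} [MeasurableSpace Ω] (P : Measure Ω) (b : Ω → ℝ)
    (σ z : ℝ) : ℝ :=
  Real.sqrt (2 / π) * (Real.sqrt (σ ^ 2 + z ^ 2))⁻¹ *
    ∫ ω, Real.exp (-(b ω) ^ 2 / (2 * (σ ^ 2 + z ^ 2))) ∂P

/-- The Gauss error function. -/
noncomputable def erf (t : ℝ) : ℝ :=
  2 / Real.sqrt π * ∫ u in (0:ℝ)..t, Real.exp (-u ^ 2)

open scoped NNReal MeasureTheory

section AbsoluteValue

theorem monotone_coe_sign : Monotone fun t : ℝ => (SignType.sign t : ℝ) := by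
  have hcast : Monotone fun s : SignType => (s : ℝ) := by
    rintro (_ | _ | _) (_ | _ | _) h <;> first | (simp; done) | exact absurd h (by decide)
  exact hcast.comp SignType.sign.monotone

theorem integrable_sign_smul {α E : Type*} [MeasurableSpace α] {μ : Measure α}
    [NormedAddCommGroup E] [NormedSpace ℝ E] {f : α → ℝ} {g : α → E} (hf : AEMeasurable f μ)
    (hg : Integrable g μ) : Integrable (fun a => (SignType.sign (f a) : ℝ) • g a) μ := by
  refine hg.bdd_smul 1
    (monotone_coe_sign.measurable.comp_aemeasurable hf).aestronglyMeasurable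
    (.of_forall fun a => ?_)
  rcases SignType.sign (f a) <;> simp

theorem hasDerivAt_integral_abs_add_mul {α : Type*} [MeasurableSpace α] {μ : Measure α}
    {U V : α → ℝ} {s : ℝ} (hV : Integrable V μ) (hU : Integrable U μ)
    (hne : ∀ᵐ a ∂μ, V a + s * U a ≠ 0) :
    HasDerivAt (fun r => ∫ a, |V a + r * U a| ∂μ)
      (∫ a, SignType.sign (V a + s * U a) * U a ∂μ) s := by
  have hint (r : ℝ) : Integrable (fun a => V a + r * U a) μ := hV.add (hU.const_mul r)
  have hlip (a : α) :
      LipschitzOnWith (Real.nnabs (U a)) (fun r => |V a + r * U a|) Set.univ := by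
    refine LipschitzOnWith.of_dist_le_mul fun r _ t _ => ?_
    calc |(|V a + r * U a| - |V a + t * U a|)|
        ≤ |V a + r * U a - (V a + t * U a)| := abs_abs_sub_abs_le_abs_sub _ _
      _ = |U a| * |r - t| := by rw [← abs_mul]; congr 1; ring
  have hderiv : ∀ᵐ a ∂μ, HasDerivAt (fun r => |V a + r * U a|)
      (SignType.sign (V a + s * U a) * U a) s := by
    filter_upwards [hne] with a ha
    exact (hasDerivAt_abs ha).comp s ((hasDerivAt_mul_const (U a)).const_add (V a))
  exact (hasDerivAt_integral_of_dominated_loc_of_lip Filter.univ_mem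
    (.of_forall fun r => (hint r).abs.aestronglyMeasurable) (hint s).abs
    (integrable_sign_smul (hint s).aemeasurable hU).aestronglyMeasurable
    (.of_forall hlip) hU hderiv).2

theorem integral_sign_sub_smul_deriv {E : Type*} [NormedAddCommGroup E] [NormedSpace ℝ E]
    [CompleteSpace E] {g g' : ℝ → E} (hderiv : ∀ t, HasDerivAt g (g' t) t)
    (hg : Integrable g) (hg' : Integrable g') (a : ℝ) :
    ∫ t, (SignType.sign (t - a) : ℝ) • g' t = -(2 : ℝ) • g a := by
  have hint : Integrable fun t => (SignType.sign (t - a) : ℝ) • g' t :=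
    integrable_sign_smul (by fun_prop) hg'
  have hright : ∫ t in Set.Ioi a, (SignType.sign (t - a) : ℝ) • g' t = -g a := by
    have htop := tendsto_zero_of_hasDerivAt_of_integrableOn_Ioi (a := a)
      (fun t _ => hderiv t) hg'.integrableOn hg.integrableOn
    rw [← zero_sub, ← integral_Ioi_of_hasDerivAt_of_tendsto' (fun t _ => hderiv t)
      hg'.integrableOn htop]
    refine setIntegral_congr_fun measurableSet_Ioi fun t ht => ?_
    simp [sign_pos (sub_pos.2 (Set.mem_Ioi.1 ht))]
  have hleft : ∫ t in Set.Iic a, (SignType.sign (t - a) : ℝ) • g' t = -g a := by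
    have hbot := tendsto_zero_of_hasDerivAt_of_integrableOn_Iic (a := a)
      (fun t _ => hderiv t) hg'.integrableOn hg.integrableOn
    rw [← sub_zero (g a), ← integral_Iic_of_hasDerivAt_of_tendsto' (fun t _ => hderiv t)
      hg'.integrableOn hbot, ← integral_neg, integral_Iic_eq_integral_Iio,
      integral_Iic_eq_integral_Iio]
    refine setIntegral_congr_fun measurableSet_Iio fun t ht => ?_
    simp [sign_neg (sub_neg.2 (Set.mem_Iio.1 ht))]
  rw [← intervalIntegral.integral_Iic_add_Ioi hint.integrableOn hint.integrableOn, hleft, hright]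
  module

end AbsoluteValue

section Gaussian

theorem hasDerivAt_gaussianPDFReal (m : ℝ) (v : ℝ≥0) (t : ℝ) :
    HasDerivAt (gaussianPDFReal m v) (-((v : ℝ)⁻¹ * ((t - m) * gaussianPDFReal m v t))) t := by
  have h := (((((hasDerivAt_id t).sub_const m).pow 2).neg.div_const (2 * (v : ℝ))).exp).const_mul
    (√(2 * π * v))⁻¹
  refine h.congr_deriv ?_
  simp only [gaussianPDFReal, id, Pi.pow_apply, Pi.neg_apply]
  push_cast
  ring

theorem integrable_sub_mul_gaussianPDFReal (m : ℝ) (v : ℝ≥0) :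
    Integrable fun t => (t - m) * gaussianPDFReal m v t := by
  obtain rfl | hv := eq_or_ne v 0
  · simp
  have hmean : Integrable (fun t => t - m) (gaussianReal m v) :=
    ((memLp_id_gaussianReal 1).integrable le_rfl).sub (integrable_const m)
  rw [gaussianReal_of_var_ne_zero _ hv, integrable_withDensity_iff (measurable_gaussianPDF m v)
    (.of_forall fun _ => gaussianPDF_lt_top)] at hmean
  simpa only [toReal_gaussianPDF] using hmean

theorem integral_sign_sub_mul_gaussianReal (m : ℝ) (v : ℝ≥0) (a : ℝ) :
    ∫ t, SignType.sign (t - a) * (t - m) ∂(gaussianReal m v) = 2 * v * gaussianPDFReal m v a := by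
  obtain rfl | hv := eq_or_ne v 0
  · simp
  have hderiv := integral_sign_sub_smul_deriv (hasDerivAt_gaussianPDFReal m v)
    (integrable_gaussianPDFReal m v) ((integrable_sub_mul_gaussianPDFReal m v).const_mul _).neg a
  have hv' : (v : ℝ) ≠ 0 := NNReal.coe_ne_zero.2 hv
  calc ∫ t, SignType.sign (t - a) * (t - m) ∂(gaussianReal m v)
      = ∫ t, -v * ((SignType.sign (t - a) : ℝ) •
          -((v : ℝ)⁻¹ * ((t - m) * gaussianPDFReal m v t))) := by
        rw [integral_gaussianReal_eq_integral_smul hv]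
        refine integral_congr_ae (.of_forall fun t => ?_)
        simp only [smul_eq_mul]
        field
    _ = 2 * v * gaussianPDFReal m v a := by
        rw [integral_const_mul, hderiv, smul_eq_mul]
        ring

theorem map_sqrt_mul_gaussianReal (v : ℝ≥0) :
    (gaussianReal 0 1).map (√v * ·) = gaussianReal 0 v := by
  rw [gaussianReal_map_const_mul, mul_zero]
  congr 1
  ext
  simp

theorem hasLaw_add_sqrt_mul_gaussianReal (ν : Measure ℝ) [SFinite ν] (v : ℝ≥0) :
    HasLaw (fun p : ℝ × ℝ => p.1 + √v * p.2) (ν ∗ gaussianReal 0 v)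
      (ν.prod (gaussianReal 0 1)) where
  map_eq := by
    rw [Measure.conv, ← map_sqrt_mul_gaussianReal v]
    nth_rw 2 [← Measure.map_id (μ := ν)]
    rw [Measure.map_prod_map _ _ measurable_id (by fun_prop),
      Measure.map_map (by fun_prop) (by fun_prop)]
    rfl

theorem ae_add_sqrt_mul_ne_zero (ν : Measure ℝ) [SFinite ν] {v : ℝ≥0} (hv : v ≠ 0) :
    ∀ᵐ p ∂(ν.prod (gaussianReal 0 1)), p.1 + √v * p.2 ≠ 0 := by
  have hac : ν ∗ gaussianReal 0 v ≪ volume :=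
    Measure.conv_absolutelyContinuous (gaussianReal_absolutelyContinuous 0 hv)
  rw [(hasLaw_add_sqrt_mul_gaussianReal ν v).ae_iff (p := (· ≠ 0)) (by fun_prop)]
  exact hac.ae_le (Measure.ae_ne volume 0)

theorem integral_sign_add_sqrt_mul_gaussianReal {v : ℝ≥0} (hv : v ≠ 0) (b : ℝ) :
    ∫ z, SignType.sign (b + √v * z) * z ∂(gaussianReal 0 1) =
      2 * √v * gaussianPDFReal 0 v b := by
  have hv' : √(v : ℝ) ≠ 0 := Real.sqrt_ne_zero'.2 (NNReal.coe_pos.2 (pos_iff_ne_zero.2 hv))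
  have hsymm : gaussianPDFReal 0 v (-b) = gaussianPDFReal 0 v b := by
    simp [gaussianPDFReal]
  calc ∫ z, SignType.sign (b + √v * z) * z ∂(gaussianReal 0 1)
      = (√v)⁻¹ * ∫ z, SignType.sign (√v * z - -b) * (√v * z - 0) ∂(gaussianReal 0 1) := by
        rw [← integral_const_mul]
        refine integral_congr_ae (.of_forall fun z => ?_)
        simp only [sub_neg_eq_add, add_comm b, sub_zero]
        field [hv']
    _ = (√v)⁻¹ * ∫ t, SignType.sign (t - -b) * (t - 0) ∂(gaussianReal 0 v) := by
        rw [← map_sqrt_mul_gaussianReal v, integral_map (by fun_prop)]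
        exact ((monotone_coe_sign.measurable.comp (by fun_prop)).mul
          (by fun_prop)).aestronglyMeasurable
    _ = 2 * √v * gaussianPDFReal 0 v b := by
        rw [integral_sign_sub_mul_gaussianReal, hsymm]
        field_simp [hv']
        rw [Real.sq_sqrt v.coe_nonneg]

theorem integral_abs_conv_gaussianReal (ν : Measure ℝ) [SFinite ν] (v : ℝ) :
    ∫ t, |t| ∂(ν ∗ gaussianReal 0 v.toNNReal) =
      ∫ p : ℝ × ℝ, |p.1 + √v * p.2| ∂(ν.prod (gaussianReal 0 1)) := by
  have hsqrt : √(v.toNNReal : ℝ) = √v := by simp only [Real.sqrt, Real.toNNReal_coe]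
  rw [← (hasLaw_add_sqrt_mul_gaussianReal ν v.toNNReal).integral_comp (by fun_prop), hsqrt]
  rfl

theorem hasDerivAt_integral_abs_conv_gaussianReal {ν : Measure ℝ} [IsFiniteMeasure ν]
    (hν : Integrable id ν) {v : ℝ} (hv : 0 < v) :
    HasDerivAt (fun u : ℝ => ∫ t, |t| ∂(ν ∗ gaussianReal 0 u.toNNReal))
      (∫ b, gaussianPDFReal 0 v.toNNReal b ∂ν) v := by
  simp only [integral_abs_conv_gaussianReal]
  lift v to ℝ≥0 using hv.le
  have hv' : v ≠ 0 := (NNReal.coe_pos.1 hv).ne'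
  have hZ : Integrable (fun p : ℝ × ℝ => p.2) (ν.prod (gaussianReal 0 1)) :=
    ((memLp_id_gaussianReal 1).integrable le_rfl).comp_snd ν
  have hB : Integrable (fun p : ℝ × ℝ => p.1) (ν.prod (gaussianReal 0 1)) :=
    hν.comp_fst (gaussianReal 0 1)
  have hinner : ∫ p : ℝ × ℝ, SignType.sign (p.1 + √v * p.2) * p.2 ∂(ν.prod (gaussianReal 0 1)) =
      2 * √v * ∫ b, gaussianPDFReal 0 v b ∂ν := by
    have hint := integrable_sign_smul (f := fun p => p.1 + √v * p.2) (by fun_prop) hZ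
    simp only [smul_eq_mul] at hint
    simp only [integral_prod _ hint, integral_sign_add_sqrt_mul_gaussianReal hv',
      integral_const_mul]
  have hcomp := (hasDerivAt_integral_abs_add_mul hB hZ (ae_add_sqrt_mul_ne_zero ν hv')).comp
    (v : ℝ) (Real.hasDerivAt_sqrt hv.ne')
  refine hcomp.congr_deriv ?_
  rw [hinner, Real.toNNReal_coe]
  field [(Real.sqrt_pos.2 hv).ne']

end Gaussian

section Gradient

variable {E : Type*} [NormedAddCommGroup E] [InnerProductSpace ℝ E] [CompleteSpace E]

theorem hasGradientAt_comp_of_hasDerivAt {f : E → ℝ} {g : ℝ → ℝ} {f' θ : E} {g' : ℝ}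
    (hg : HasDerivAt g g' (f θ)) (hf : HasGradientAt f f' θ) :
    HasGradientAt (fun u => g (f u)) (g' • f') θ := by
  rw [hasGradientAt_iff_hasFDerivAt] at hf ⊢
  rw [map_smulₛₗ]
  exact hg.comp_hasFDerivAt θ hf

theorem hasGradientAt_const_add_inner_map_sub {T : E →ₗ[ℝ] E} (hT : T.IsSymmetric) (c : ℝ)
    (a θ : E) :
    HasGradientAt (fun u => c + ⟪u - a, T (u - a)⟫) ((2 : ℝ) • T (θ - a)) θ := by
  let S : E →L[ℝ] E := ⟨T, hT.continuous⟩
  have hquad : HasFDerivAt (fun u => ⟪S u, u⟫) (2 • innerSL ℝ (S (θ - a))) (θ - a) :=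
    (LinearMap.IsSymmetric.hasStrictFDerivAt_reApplyInnerSelf hT (θ - a)).hasFDerivAt
  have hshift := (hquad.comp θ ((hasFDerivAt_id θ).sub_const a)).const_add c
  rw [hasGradientAt_iff_hasFDerivAt]
  refine (hshift.congr_fderiv ?_).congr_of_eventuallyEq (.of_forall fun u => ?_)
  · ext w
    simp [S, two_smul]
  · simp [S, real_inner_comm]

end Gradient

section Residual

variable {E Ω : Type*} [NormedAddCommGroup E] [InnerProductSpace ℝ E]
  [MeasurableSpace E] [OpensMeasurableSpace E] [MeasurableSpace Ω] {P : Measure Ω}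
  {x : Ω → E} {ε b : Ω → ℝ}

theorem hasLaw_add_inner_add {μ₁ μ₂ ν : Measure ℝ} [IsFiniteMeasure μ₁] [IsFiniteMeasure μ₂]
    [SigmaFinite ν] {u : E} (hx : HasLaw (fun ω => ⟪u, x ω⟫) μ₁ P)
    (hε : HasLaw ε μ₂ P) (hb : HasLaw b ν P)
    (hxε : IndepFun x ε P) (hxεb : IndepFun (fun ω => (x ω, ε ω)) b P) :
    HasLaw (fun ω => b ω + (⟪u, x ω⟫ + ε ω)) (ν ∗ (μ₁ ∗ μ₂)) P := by
  have hu : Measurable fun y : E => ⟪u, y⟫ := (innerSL ℝ u).continuous.measurable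
  have hsum : HasLaw (fun ω => ⟪u, x ω⟫ + ε ω) (μ₁ ∗ μ₂) P :=
    (hxε.comp hu measurable_id).hasLaw_fun_add hx hε
  have hindep : IndepFun b (fun ω => ⟪u, x ω⟫ + ε ω) P :=
    (hxεb.comp ((hu.comp measurable_fst).add measurable_snd) measurable_id).symm
  exact hindep.hasLaw_fun_add hb hsum

theorem hasLaw_residual {T : E →ₗ[ℝ] E} (hT : T.IsPositive) {σ : ℝ} {ν : Measure ℝ} [SigmaFinite ν]
    (hx : ∀ v, HasLaw (fun ω => ⟪v, x ω⟫) (gaussianReal 0 ⟪v, T v⟫.toNNReal) P)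
    (hε : HasLaw ε (gaussianReal 0 (σ ^ 2).toNNReal) P) (hb : HasLaw b ν P)
    (hxε : IndepFun x ε P) (hxεb : IndepFun (fun ω => (x ω, ε ω)) b P) (θs θ : E) :
    HasLaw (fun ω => ⟪x ω, θs⟫ + ε ω + b ω - ⟪x ω, θ⟫)
      (ν ∗ gaussianReal 0 (σ ^ 2 + ⟪θ - θs, T (θ - θs)⟫).toNNReal) P := by
  have hvar : ⟪θs - θ, T (θs - θ)⟫ = ⟪θ - θs, T (θ - θs)⟫ := by
    rw [← neg_sub θ θs, map_neg, inner_neg_neg]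
  have hconv : gaussianReal 0 ⟪θs - θ, T (θs - θ)⟫.toNNReal ∗ gaussianReal 0 (σ ^ 2).toNNReal =
      gaussianReal 0 (σ ^ 2 + ⟪θ - θs, T (θ - θs)⟫).toNNReal := by
    rw [gaussianReal_conv_gaussianReal, add_zero, hvar, add_comm (σ ^ 2),
      Real.toNNReal_add (hT.inner_nonneg_right _) (sq_nonneg σ)]
  rw [← hconv]
  refine (hasLaw_add_inner_add (hx (θs - θ)) hε hb hxε hxεb).congr (.of_forall fun ω => ?_)
  simp only [real_inner_comm (x ω), inner_sub_right]
  ring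

end Residual

theorem alphaF_eq_two_mul_integral_gaussianPDFReal {Ω : Type} [MeasurableSpace Ω] (P : Measure Ω)
    (b : Ω → ℝ) (σ z : ℝ) :
    alphaF P b σ z = 2 * ∫ ω, gaussianPDFReal 0 (σ ^ 2 + z ^ 2).toNNReal (b ω) ∂P := by
  have hconst : √(2 / π) = 2 * (√(2 * π))⁻¹ := by
    rw [Real.sqrt_div zero_le_two, Real.sqrt_mul zero_le_two]
    field_simp
    rw [Real.sq_sqrt zero_le_two]
  simp only [alphaF, gaussianPDFReal, Real.coe_toNNReal _ (by positivity : 0 ≤ σ ^ 2 + z ^ 2),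
    integral_const_mul, sub_zero, hconst, Real.sqrt_mul Real.two_pi_pos.le]
  ring

theorem stmt1_general {E : Type*} [NormedAddCommGroup E] [InnerProductSpace ℝ E] [CompleteSpace E]
    [MeasurableSpace E] [OpensMeasurableSpace E] {Ω : Type} [MeasurableSpace Ω] {P : Measure Ω}
    {θs : E} {T : E →ₗ[ℝ] E} (hT : T.IsPositive) {σ : ℝ} {x : Ω → E} {ε b : Ω → ℝ}
    (hx : ∀ v, HasLaw (fun ω => ⟪v, x ω⟫) (gaussianReal 0 ⟪v, T v⟫.toNNReal) P)
    (hε : HasLaw ε (gaussianReal 0 (σ ^ 2).toNNReal) P) (hb : Integrable b P)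
    (hxε : IndepFun x ε P) (hxεb : IndepFun (fun ω => (x ω, ε ω)) b P)
    {θ : E} (hθ : 0 < σ ^ 2 + ⟪θ - θs, T (θ - θs)⟫) :
    HasGradientAt (fun θ' => ∫ ω, |⟪x ω, θs⟫ + ε ω + b ω - ⟪x ω, θ'⟫| ∂P)
      (alphaF P b σ √⟪θ - θs, T (θ - θs)⟫ • T (θ - θs)) θ := by
  have := hε.isProbabilityMeasure
  have := Measure.isProbabilityMeasure_map (μ := P) hb.aemeasurable
  have hloss (u : E) : ∫ ω, |⟪x ω, θs⟫ + ε ω + b ω - ⟪x ω, u⟫| ∂P =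
      ∫ t, |t| ∂(P.map b ∗ gaussianReal 0 (σ ^ 2 + ⟪u - θs, T (u - θs)⟫).toNNReal) :=
    (hasLaw_residual hT hx hε ⟨hb.aemeasurable, rfl⟩ hxε hxεb θs u).integral_comp
      (f := fun t => |t|) (by fun_prop)
  have hderiv := hasDerivAt_integral_abs_conv_gaussianReal (ν := P.map b)
    ((integrable_map_measure (by fun_prop) hb.aemeasurable).2 hb) hθ
  have halpha : alphaF P b σ √⟪θ - θs, T (θ - θs)⟫ =
      2 * ∫ t, gaussianPDFReal 0 (σ ^ 2 + ⟪θ - θs, T (θ - θs)⟫).toNNReal t ∂(P.map b) := by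
    rw [alphaF_eq_two_mul_integral_gaussianPDFReal, Real.sq_sqrt (hT.inner_nonneg_right _),
      integral_map hb.aemeasurable (by fun_prop)]
  simp only [hloss, halpha, mul_comm (2 : ℝ), mul_smul]
  exact hasGradientAt_comp_of_hasDerivAt (f := fun u => σ ^ 2 + ⟪u - θs, T (u - θs)⟫) hderiv
    (hasGradientAt_const_add_inner_map_sub hT.isSymmetric (σ ^ 2) θs θ)

theorem stmt1 {d : ℕ} (hd : 1 ≤ d)
    {Ω : Type} [MeasurableSpace Ω] (P : Measure Ω) [IsProbabilityMeasure P]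
    (θs : Vec d) (H : Matrix (Fin d) (Fin d) ℝ) (hH : H.PosDef)
    (σ η : ℝ) (hσ : 0 < σ) (hη0 : 0 ≤ η) (hη1 : η < 1)
    (x : Ω → Vec d) (ε b : Ω → ℝ)
    (hxm : Measurable x) (hεm : Measurable ε) (hbm : Measurable b)
    (hxg : ∀ v : Vec d, Measure.map (fun ω => ⟪v, x ω⟫) P
        = gaussianReal 0 (Real.toNNReal ⟪v, Matrix.toEuclideanLin H v⟫))
    (hεg : Measure.map ε P = gaussianReal 0 (Real.toNNReal (σ ^ 2)))
    (hbη : P {ω | b ω ≠ 0} = ENNReal.ofReal η)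
    (hbi : Integrable b P)
    (hind1 : IndepFun x ε P)
    (hind2 : IndepFun (fun ω => (x ω, ε ω)) b P):
    ∀ θ : Vec d,
      HasGradientAt (fun θ' => fLoss P x ε b θs θ')
        (alphaF P b σ (sigTh H θs θ) • Matrix.toEuclideanLin H (θ - θs)) θ :=
  have hT := Matrix.isPositive_toEuclideanLin_iff.2 hH.posSemidef
  fun _ => stmt1_general hT (fun v => ⟨by fun_prop, hxg v⟩) ⟨hεm.aemeasurable, hεg⟩ hbi hind1 hind2
    (add_pos_of_pos_of_nonneg (pow_pos hσ 2) (hT.inner_nonneg_right _))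
end
end

section
/- For any ℝ^d-valued random variable θ (defined on an arbitrary probability space), E‖θ − θ*‖²_H ≤ (4σ/(1−η̃))·E[f(θ) − f(θ*)] + (10/(1−η̃)²)·E[(f(θ) − f(θ*))²], where both sides may be infinite. -/
/-!
The inequality holds pointwise in `θ` and is then integrated.

Write `q = ‖θ - θ*‖²_H`, `r = √(σ² + q)` and `A = 1 - η̃ = E[exp (-b² / (2σ²))]`. The residual
`y - ⟨x, θ⟩` is the sum of `b` and an independent `N(0, r²)` variable, so `f(θ) = E|r Z + b|` with
`Z` standard Gaussian independent of `b`, while `f(θ*) = E|σ Z + b|`. The map `r ↦ E|r Z + b|` is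
convex, with slope `E[Z sign (σ Z + b)] = √(2/π) A` at `r = σ`; hence `D := f(θ) - f(θ*)` satisfies
`√(2/π) A (r - σ) ≤ D`, and `q = 2σ(r - σ) + (r - σ)² ≤ √(2π) σ D / A + (π/2) D² / A²`.
-/

open MeasureTheory ProbabilityTheory Real
open scoped RealInnerProductSpace ENNReal

noncomputable section

section RealInequalities

lemma sqrt_two_mul_pi_le_four : √(2 * π) ≤ 4 :=
  sqrt_le_iff.2 ⟨by norm_num, by linarith [pi_le_four]⟩

lemma two_div_sqrt_two_div_pi : 2 / √(2 / π) = √(2 * π) := by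
  rw [div_eq_iff (by positivity), ← sqrt_mul (by positivity),
    show 2 * π * (2 / π) = 2 ^ 2 by field_simp, sqrt_sq zero_le_two]

lemma sq_sub_sq_le_of_sub_mul_le {r s k D : ℝ} (hs : 0 ≤ s) (hsr : s ≤ r) (hk : 0 < k)
    (h : (r - s) * k ≤ D) : r ^ 2 - s ^ 2 ≤ 2 * s * (D / k) + (D / k) ^ 2 := by
  have hgap : r - s ≤ D / k := (le_div_iff₀ hk).2 h
  calc r ^ 2 - s ^ 2 = 2 * s * (r - s) + (r - s) ^ 2 := by ring
    _ ≤ 2 * s * (D / k) + (D / k) ^ 2 := by gcongr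

end RealInequalities

section Integration

lemma lintegral_ofReal_le_of_le_mul_add_mul {α : Type*} [MeasurableSpace α] {ν : Measure α}
    {g u v : α → ℝ} {p q : ℝ} (hp : 0 ≤ p) (hq : 0 ≤ q) (hu : AEMeasurable u ν)
    (hle : ∀ᵐ ω ∂ν, g ω ≤ p * u ω + q * v ω) :
    ∫⁻ ω, ENNReal.ofReal (g ω) ∂ν ≤ ENNReal.ofReal p * ∫⁻ ω, ENNReal.ofReal (u ω) ∂ν
      + ENNReal.ofReal q * ∫⁻ ω, ENNReal.ofReal (v ω) ∂ν := by
  rw [← lintegral_const_mul' _ _ ENNReal.ofReal_ne_top,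
    ← lintegral_const_mul' _ _ ENNReal.ofReal_ne_top,
    ← lintegral_add_left' (hu.ennreal_ofReal.const_mul _)]
  refine lintegral_mono_ae (hle.mono fun ω hω => (ENNReal.ofReal_le_ofReal hω).trans ?_)
  rw [← ENNReal.ofReal_mul hp, ← ENNReal.ofReal_mul hq]
  exact ENNReal.ofReal_add_le

lemma integral_comp_of_indepFun {Ω α β E : Type*} [MeasurableSpace Ω] [MeasurableSpace α]
    [MeasurableSpace β] [NormedAddCommGroup E] [NormedSpace ℝ E] {P : Measure Ω}
    [IsFiniteMeasure P] {X : Ω → α} {Y : Ω → β} (hX : AEMeasurable X P) (hY : AEMeasurable Y P)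
    (hXY : IndepFun X Y P) {g : α × β → E} (hg : Integrable g ((P.map X).prod (P.map Y))) :
    ∫ ω, g (X ω, Y ω) ∂P = ∫ ω, ∫ s, g (s, Y ω) ∂P.map X ∂P := by
  have hlaw := (indepFun_iff_map_prod_eq_prod_map_map hX hY).1 hXY
  rw [← integral_map (hX.prodMk hY) (hlaw ▸ hg.aestronglyMeasurable), hlaw,
    integral_prod_symm _ hg, integral_map hY hg.integral_prod_right.aestronglyMeasurable]

lemma integrable_exp_neg_sq_div {Ω : Type*} [MeasurableSpace Ω] {P : Measure Ω} [IsFiniteMeasure P]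
    {b : Ω → ℝ} (hb : AEMeasurable b P) (σ : ℝ) :
    Integrable (fun ω => exp (-(b ω) ^ 2 / (2 * σ ^ 2))) P := by
  refine .of_bound (by fun_prop) 1 (.of_forall fun ω => ?_)
  rw [norm_of_nonneg (exp_pos _).le, exp_le_one_iff, neg_div]
  exact neg_nonpos.2 (by positivity)

end Integration

section Sign

lemma monotone_coe_signType : Monotone fun s : SignType => (s : ℝ) := by
  intro s t
  cases s <;> cases t <;> simp

lemma measurable_coe_sign : Measurable fun y : ℝ => (SignType.sign y : ℝ) :=
  (monotone_coe_signType.comp SignType.sign.monotone).measurable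

lemma abs_coe_sign_le_one (y : ℝ) : |(SignType.sign y : ℝ)| ≤ 1 := by
  cases SignType.sign y <;> simp

lemma abs_add_sub_mul_sign_le_abs (y z : ℝ) : |y| + (z - y) * SignType.sign y ≤ |z| :=
  calc |y| + (z - y) * SignType.sign y = z * SignType.sign y := by
        rw [sub_mul, self_mul_sign, add_sub_cancel]
    _ ≤ |z * SignType.sign y| := le_abs_self _
    _ ≤ |z| := by
        rw [abs_mul]
        exact mul_le_of_le_one_right (abs_nonneg z) (abs_coe_sign_le_one y)

end Sign

section GaussianSign

lemma integral_Ioi_mul_exp_neg_mul_sq {β : ℝ} (hβ : 0 < β) (a : ℝ) :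
    ∫ z in Set.Ioi a, z * exp (-β * z ^ 2) = exp (-β * a ^ 2) / (2 * β) := by
  have hderiv : ∀ z ∈ Set.Ici a,
      HasDerivAt (fun z : ℝ => -(exp (-β * z ^ 2) / (2 * β))) (z * exp (-β * z ^ 2)) z := by
    intro z _
    refine ((((hasDerivAt_pow 2 z).const_mul (-β)).exp.div_const (2 * β)).neg).congr_deriv ?_
    field_simp
    ring
  have hlim :
      Filter.Tendsto (fun z : ℝ => -(exp (-β * z ^ 2) / (2 * β))) Filter.atTop (nhds 0) := by
    have hexp : Filter.Tendsto (fun z : ℝ => exp (-β * z ^ 2)) Filter.atTop (nhds 0) :=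
      tendsto_exp_atBot.comp
        ((Filter.tendsto_pow_atTop two_ne_zero).const_mul_atTop_of_neg (neg_neg_of_pos hβ))
    simpa using (hexp.div_const (2 * β)).neg
  rw [integral_Ioi_of_hasDerivAt_of_tendsto' hderiv
    (integrable_mul_exp_neg_mul_sq hβ).integrableOn hlim, zero_sub, neg_neg]

lemma integral_Iic_mul_exp_neg_mul_sq {β : ℝ} (hβ : 0 < β) (a : ℝ) :
    ∫ z in Set.Iic a, z * exp (-β * z ^ 2) = -(exp (-β * a ^ 2) / (2 * β)) := by
  have hodd := integral_comp_neg_Iic a fun z : ℝ => z * exp (-β * z ^ 2)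
  simp only [neg_sq, integral_Ioi_mul_exp_neg_mul_sq hβ] at hodd
  rw [← hodd, ← integral_neg]
  simp only [neg_mul, neg_neg]

lemma integral_sign_sub_mul_exp_neg_mul_sq {β : ℝ} (hβ : 0 < β) (a : ℝ) :
    ∫ z : ℝ, SignType.sign (z - a) * (z * exp (-β * z ^ 2)) = exp (-β * a ^ 2) / β := by
  have hint : Integrable fun z : ℝ => (SignType.sign (z - a) : ℝ) * (z * exp (-β * z ^ 2)) :=
    (integrable_mul_exp_neg_mul_sq hβ).bdd_mul
      (measurable_coe_sign.comp (by fun_prop)).aestronglyMeasurable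
      (.of_forall fun z => abs_coe_sign_le_one (z - a))
  have hright : ∫ z in Set.Ioi a, SignType.sign (z - a) * (z * exp (-β * z ^ 2))
      = exp (-β * a ^ 2) / (2 * β) := by
    rw [← integral_Ioi_mul_exp_neg_mul_sq hβ]
    refine setIntegral_congr_fun measurableSet_Ioi fun z hz => ?_
    simp only [sign_pos (sub_pos.2 (Set.mem_Ioi.1 hz)), SignType.coe_one, one_mul]
  have hleft : ∫ z in Set.Iic a, SignType.sign (z - a) * (z * exp (-β * z ^ 2))
      = exp (-β * a ^ 2) / (2 * β) := by
    rw [← neg_neg (exp (-β * a ^ 2) / (2 * β)), ← integral_Iic_mul_exp_neg_mul_sq hβ,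
      ← integral_neg, integral_Iic_eq_integral_Iio, integral_Iic_eq_integral_Iio]
    refine setIntegral_congr_fun measurableSet_Iio fun z hz => ?_
    simp only [sign_neg (sub_neg.2 (Set.mem_Iio.1 hz)), SignType.coe_neg_one, neg_one_mul]
  rw [← integral_add_compl measurableSet_Ioi hint, Set.compl_Ioi, hright, hleft]
  field_simp
  norm_num

lemma integral_sign_sub_mul_gaussianReal_s14 {v : NNReal} (hv : v ≠ 0) (a : ℝ) :
    ∫ z, SignType.sign (z - a) * z ∂gaussianReal 0 v
      = √(2 * v / π) * exp (-a ^ 2 / (2 * v)) := by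
  have : (0 : ℝ) < v := NNReal.coe_pos.2 (pos_iff_ne_zero.2 hv)
  have hdensity (z : ℝ) : gaussianPDFReal 0 v z • (SignType.sign (z - a) * z)
      = (√(2 * π * v))⁻¹ *
        (SignType.sign (z - a) * (z * exp (-(2 * (v : ℝ))⁻¹ * z ^ 2))) := by
    rw [gaussianPDFReal, smul_eq_mul, sub_zero,
      show -z ^ 2 / (2 * (v : ℝ)) = -(2 * (v : ℝ))⁻¹ * z ^ 2 by ring]
    ring
  have hconst : (√(2 * π * v))⁻¹ * (2 * v) = √(2 * v / π) := by
    rw [inv_mul_eq_iff_eq_mul₀ (by positivity), ← sqrt_mul (by positivity),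
      show 2 * π * v * (2 * v / π) = (2 * v) ^ 2 by field_simp, sqrt_sq (by positivity)]
  rw [integral_gaussianReal_eq_integral_smul hv]
  simp_rw [hdensity]
  rw [integral_const_mul, integral_sign_sub_mul_exp_neg_mul_sq (by positivity), div_inv_eq_mul,
    ← hconst]
  ring_nf

lemma integral_sign_mul_add_mul_gaussianReal {r : ℝ} (hr : 0 < r) (c : ℝ) :
    ∫ z, SignType.sign (r * z + c) * z ∂gaussianReal 0 1
      = √(2 / π) * exp (-c ^ 2 / (2 * r ^ 2)) := by
  have hsign (z : ℝ) : SignType.sign (r * z + c) = SignType.sign (z - -c / r) := by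
    rw [show r * z + c = r * (z - -c / r) by field_simp; ring, sign_mul, sign_pos hr, one_mul]
  simp_rw [hsign]
  rw [integral_sign_sub_mul_gaussianReal_s14 one_ne_zero, NNReal.coe_one, mul_one, div_pow, neg_sq,
    ← neg_div, div_div, mul_comm (r ^ 2)]

end GaussianSign

section FoldedNormal

/-- The mean `E|r Z + c|` of the folded normal law, with `Z` standard Gaussian. The scale `r` is
kept as a coefficient of `Z`, so that the mean is visibly convex in `r`. -/
def foldedNormalMean (r c : ℝ) : ℝ :=
  ∫ z, |r * z + c| ∂gaussianReal 0 1

lemma sub_mul_le_foldedNormalMean_sub (r c : ℝ) {r₀ : ℝ} (hr₀ : 0 < r₀) :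
    (r - r₀) * (√(2 / π) * exp (-c ^ 2 / (2 * r₀ ^ 2)))
      ≤ foldedNormalMean r c - foldedNormalMean r₀ c := by
  have habs (s : ℝ) : Integrable (fun z => |s * z + c|) (gaussianReal 0 1) :=
    ((IsGaussian.integrable_fun_id.const_mul s).add (integrable_const c)).abs
  have hslope : Integrable (fun z => SignType.sign (r₀ * z + c) * z) (gaussianReal 0 1) :=
    IsGaussian.integrable_fun_id.bdd_mul
      (measurable_coe_sign.comp (by fun_prop)).aestronglyMeasurable
      (.of_forall fun z => abs_coe_sign_le_one (r₀ * z + c))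
  have htangent (z : ℝ) :
      (r - r₀) * (SignType.sign (r₀ * z + c) * z) ≤ |r * z + c| - |r₀ * z + c| := by
    linarith [abs_add_sub_mul_sign_le_abs (r₀ * z + c) (r * z + c)]
  rw [← integral_sign_mul_add_mul_gaussianReal hr₀, ← integral_const_mul, foldedNormalMean,
    foldedNormalMean, ← integral_sub (habs r) (habs r₀)]
  exact integral_mono (hslope.const_mul _) ((habs r).sub (habs r₀)) htangent

lemma integral_abs_add_gaussianReal (r c : ℝ) :
    ∫ u, |u + c| ∂gaussianReal 0 (r ^ 2).toNNReal = foldedNormalMean r c := by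
  have hmap : gaussianReal 0 (r ^ 2).toNNReal = (gaussianReal 0 1).map (r * ·) := by
    rw [gaussianReal_map_const_mul, mul_zero, mul_one, toNNReal_of_nonneg (sq_nonneg r)]
  rw [hmap, integral_map (by fun_prop) (by fun_prop), foldedNormalMean]

variable {Ω : Type*} [MeasurableSpace Ω] {P : Measure Ω} {b : Ω → ℝ}

lemma integrable_foldedNormalMean_comp [IsFiniteMeasure P] (hb : Integrable b P) (r : ℝ) :
    Integrable (fun ω => foldedNormalMean r (b ω)) P := by
  have hprod : Integrable (fun p : Ω × ℝ => r * p.2 + b p.1) (P.prod (gaussianReal 0 1)) :=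
    ((IsGaussian.integrable_fun_id.const_mul r).comp_snd P).add (hb.comp_fst _)
  exact hprod.abs.integral_prod_left

lemma integral_abs_add_of_indepFun_gaussianReal [IsFiniteMeasure P] {U : Ω → ℝ} {r : ℝ}
    (hU : P.map U = gaussianReal 0 (r ^ 2).toNNReal) (hb : Integrable b P)
    (hind : IndepFun U b P) :
    ∫ ω, |U ω + b ω| ∂P = ∫ ω, foldedNormalMean r (b ω) ∂P := by
  have hUm : AEMeasurable U P := by
    have : NeZero (P.map U) := hU ▸ inferInstance
    exact aemeasurable_of_map_neZero this
  have hbm : AEMeasurable b P := hb.aemeasurable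
  have hUi : Integrable (fun u : ℝ => u) (P.map U) := hU ▸ IsGaussian.integrable_fun_id
  have hbi : Integrable (fun c : ℝ => c) (P.map b) :=
    (integrable_map_measure (by fun_prop) hbm).2 hb
  have hsum : Integrable (fun p : ℝ × ℝ => |p.1 + p.2|) ((P.map U).prod (P.map b)) :=
    ((hUi.comp_fst _).add (hbi.comp_snd _)).abs
  rw [integral_comp_of_indepFun hUm hbm hind hsum]
  simp only [hU, integral_abs_add_gaussianReal]

end FoldedNormal

section EffectiveOutliers

variable {Ω : Type} [MeasurableSpace Ω] {P : Measure Ω} {b : Ω → ℝ}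

lemma one_sub_etaT (P : Measure Ω) (b : Ω → ℝ) (σ : ℝ) :
    1 - etaT P b σ = ∫ ω, exp (-(b ω) ^ 2 / (2 * σ ^ 2)) ∂P :=
  sub_sub_cancel _ _

lemma one_sub_etaT_pos [IsFiniteMeasure P] [NeZero P] (hb : AEMeasurable b P) (σ : ℝ) :
    0 < 1 - etaT P b σ :=
  one_sub_etaT P b σ ▸ integral_exp_pos (integrable_exp_neg_sq_div hb σ)

lemma sub_mul_one_sub_etaT_le [IsFiniteMeasure P] (hb : Integrable b P) {σ : ℝ} (hσ : 0 < σ)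
    (r : ℝ) :
    (r - σ) * (√(2 / π) * (1 - etaT P b σ))
      ≤ ∫ ω, foldedNormalMean r (b ω) ∂P - ∫ ω, foldedNormalMean σ (b ω) ∂P := by
  have hF := integrable_foldedNormalMean_comp hb
  have hexp := integrable_exp_neg_sq_div hb.aemeasurable σ
  rw [one_sub_etaT, ← integral_const_mul, ← integral_const_mul, ← integral_sub (hF r) (hF σ)]
  exact integral_mono ((hexp.const_mul _).const_mul _) ((hF r).sub (hF σ))
    fun ω => sub_mul_le_foldedNormalMean_sub r (b ω) hσ

end EffectiveOutliers

section CorruptedGaussianModel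

variable {d : ℕ} {Ω : Type} [MeasurableSpace Ω] {P : Measure Ω}
  {H : Matrix (Fin d) (Fin d) ℝ} {σ : ℝ} {x : Ω → Vec d} {ε b : Ω → ℝ}

/-- The corrupted Gaussian linear model: a centered Gaussian design `x` with covariance `H`, a noise
`ε ∼ N(0, σ²)` and an integrable corruption `b`, mutually independent. The law of `x` is prescribed
through its one-dimensional marginals, and mutual independence as that of `x, ε` and of
`(x, ε), b`. -/
structure CorruptedGaussianModel (P : Measure Ω) (H : Matrix (Fin d) (Fin d) ℝ) (σ : ℝ)
    (x : Ω → Vec d) (ε b : Ω → ℝ) : Prop where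
  posSemidef : H.PosSemidef
  measurable_x : Measurable x
  measurable_ε : Measurable ε
  measurable_b : Measurable b
  map_inner_x : ∀ v : Vec d,
    P.map (fun ω => ⟪v, x ω⟫) = gaussianReal 0 (toNNReal ⟪v, Matrix.toEuclideanLin H v⟫)
  map_ε : P.map ε = gaussianReal 0 (toNNReal (σ ^ 2))
  integrable_b : Integrable b P
  indepFun_x_ε : IndepFun x ε P
  indepFun_b : IndepFun (fun ω => (x ω, ε ω)) b P

/-- The standard deviation `√(σ² + ‖v‖²_H)` of `⟨v, x⟩ + ε`, the Gaussian part of the residual of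
`θ* - v`. -/
def residualStd (H : Matrix (Fin d) (Fin d) ℝ) (σ : ℝ) (v : Vec d) : ℝ :=
  √(σ ^ 2 + ⟪v, Matrix.toEuclideanLin H v⟫)

lemma inner_toEuclideanLin_nonneg (hH : H.PosSemidef) (v : Vec d) :
    0 ≤ ⟪v, Matrix.toEuclideanLin H v⟫ :=
  (Matrix.isPositive_toEuclideanLin_iff.2 hH).inner_nonneg_right v

lemma residualStd_sq (hH : H.PosSemidef) (σ : ℝ) (v : Vec d) :
    residualStd H σ v ^ 2 = σ ^ 2 + ⟪v, Matrix.toEuclideanLin H v⟫ :=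
  sq_sqrt (add_nonneg (sq_nonneg σ) (inner_toEuclideanLin_nonneg hH v))

lemma residualStd_zero (H : Matrix (Fin d) (Fin d) ℝ) (hσ : 0 ≤ σ) : residualStd H σ 0 = σ := by
  rw [residualStd, inner_zero_left, add_zero, sqrt_sq hσ]

lemma le_residualStd (hH : H.PosSemidef) (σ : ℝ) (v : Vec d) : σ ≤ residualStd H σ v :=
  le_sqrt_of_sq_le (le_add_of_nonneg_right (inner_toEuclideanLin_nonneg hH v))

lemma residualStd_neg (H : Matrix (Fin d) (Fin d) ℝ) (σ : ℝ) (v : Vec d) :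
    residualStd H σ (-v) = residualStd H σ v := by
  rw [residualStd, residualStd, map_neg, inner_neg_neg]

lemma measurable_fLoss [SFinite P] (hx : Measurable x) (hε : Measurable ε) (hb : Measurable b)
    (θs : Vec d) : Measurable (fLoss P x ε b θs) := by
  have hresidual : Measurable fun p : Vec d × Ω =>
      |⟪x p.2, θs⟫ + ε p.2 + b p.2 - ⟪x p.2, p.1⟫| := by
    fun_prop
  exact hresidual.stronglyMeasurable.integral_prod_right.measurable

namespace CorruptedGaussianModel

lemma map_inner_add_noise (h : CorruptedGaussianModel P H σ x ε b) (v : Vec d) :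
    P.map ((fun ω => ⟪v, x ω⟫) + ε) = gaussianReal 0 (toNNReal (residualStd H σ v ^ 2)) := by
  have hind : IndepFun (fun ω => ⟪v, x ω⟫) ε P :=
    h.indepFun_x_ε.comp (φ := fun w : Vec d => ⟪v, w⟫) (by fun_prop) measurable_id
  rw [gaussianReal_add_gaussianReal_of_indepFun hind (h.map_inner_x v) h.map_ε, add_zero,
    residualStd_sq h.posSemidef, add_comm (σ ^ 2),
    toNNReal_add (inner_toEuclideanLin_nonneg h.posSemidef v) (sq_nonneg σ)]

lemma fLoss_eq_integral_foldedNormalMean [IsFiniteMeasure P]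
    (h : CorruptedGaussianModel P H σ x ε b) (θs θ : Vec d) :
    fLoss P x ε b θs θ = ∫ ω, foldedNormalMean (residualStd H σ (θ - θs)) (b ω) ∂P := by
  have hind : IndepFun ((fun ω => ⟪θs - θ, x ω⟫) + ε) b P :=
    h.indepFun_b.comp (φ := fun p : Vec d × ℝ => ⟪θs - θ, p.1⟫ + p.2) (by fun_prop) measurable_id
  rw [← neg_sub θs θ, residualStd_neg, fLoss,
    ← integral_abs_add_of_indepFun_gaussianReal (h.map_inner_add_noise _) h.integrable_b hind]
  refine integral_congr_ae (.of_forall fun ω => ?_)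
  simp only [Pi.add_apply, inner_sub_left, real_inner_comm (x ω)]
  ring_nf

lemma sub_mul_one_sub_etaT_le_fLoss_sub [IsFiniteMeasure P]
    (h : CorruptedGaussianModel P H σ x ε b) (hσ : 0 < σ) (θs θ : Vec d) :
    (residualStd H σ (θ - θs) - σ) * (√(2 / π) * (1 - etaT P b σ))
      ≤ fLoss P x ε b θs θ - fLoss P x ε b θs θs := by
  rw [h.fLoss_eq_integral_foldedNormalMean, h.fLoss_eq_integral_foldedNormalMean, sub_self,
    residualStd_zero H hσ.le]
  exact sub_mul_one_sub_etaT_le h.integrable_b hσ _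

lemma inner_sub_toEuclideanLin_le [IsProbabilityMeasure P]
    (h : CorruptedGaussianModel P H σ x ε b) (hσ : 0 < σ) (θs θ : Vec d) :
    ⟪θ - θs, Matrix.toEuclideanLin H (θ - θs)⟫
      ≤ √(2 * π) * σ / (1 - etaT P b σ) * (fLoss P x ε b θs θ - fLoss P x ε b θs θs)
        + π / 2 / (1 - etaT P b σ) ^ 2 * (fLoss P x ε b θs θ - fLoss P x ε b θs θs) ^ 2 := by
  have hA := one_sub_etaT_pos h.measurable_b.aemeasurable σ (P := P)
  have hbound := sq_sub_sq_le_of_sub_mul_le hσ.le (le_residualStd h.posSemidef σ (θ - θs))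
    (by positivity) (h.sub_mul_one_sub_etaT_le_fLoss_sub hσ θs θ)
  rw [residualStd_sq h.posSemidef, add_sub_cancel_left] at hbound
  refine hbound.trans_eq ?_
  congr 1
  · rw [← two_div_sqrt_two_div_pi, ← div_div]
    ring
  · rw [div_pow, mul_pow, sq_sqrt (by positivity)]
    field_simp

end CorruptedGaussianModel

end CorruptedGaussianModel

theorem stmt14_general {d : ℕ} {Ω : Type} [MeasurableSpace Ω] {P : Measure Ω}
    [IsProbabilityMeasure P] {H : Matrix (Fin d) (Fin d) ℝ} {σ : ℝ} {x : Ω → Vec d}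
    {ε b : Ω → ℝ} (h : CorruptedGaussianModel P H σ x ε b) (hσ : 0 < σ) (θs : Vec d)
    {Ω₂ : Type*} [MeasurableSpace Ω₂] {P₂ : Measure Ω₂} {Θ : Ω₂ → Vec d}
    (hΘ : AEMeasurable Θ P₂) :
    ∫⁻ ω, ENNReal.ofReal ⟪Θ ω - θs, Matrix.toEuclideanLin H (Θ ω - θs)⟫ ∂P₂
      ≤ ENNReal.ofReal (√(2 * π) * σ / (1 - etaT P b σ)) *
          ∫⁻ ω, ENNReal.ofReal (fLoss P x ε b θs (Θ ω) - fLoss P x ε b θs θs) ∂P₂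
        + ENNReal.ofReal (π / 2 / (1 - etaT P b σ) ^ 2) *
          ∫⁻ ω, ENNReal.ofReal ((fLoss P x ε b θs (Θ ω) - fLoss P x ε b θs θs) ^ 2) ∂P₂ := by
  have hA := one_sub_etaT_pos h.measurable_b.aemeasurable σ (P := P)
  have hf := measurable_fLoss (P := P) h.measurable_x h.measurable_ε h.measurable_b θs
  exact lintegral_ofReal_le_of_le_mul_add_mul (by positivity) (by positivity)
    ((hf.comp_aemeasurable hΘ).sub_const _)
    (.of_forall fun ω => h.inner_sub_toEuclideanLin_le hσ θs (Θ ω))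

theorem stmt14 {d : ℕ} (hd : 1 ≤ d)
    {Ω : Type} [MeasurableSpace Ω] (P : Measure Ω) [IsProbabilityMeasure P]
    (θs : Vec d) (H : Matrix (Fin d) (Fin d) ℝ) (hH : H.PosDef)
    (σ η : ℝ) (hσ : 0 < σ) (hη0 : 0 ≤ η) (hη1 : η < 1)
    (x : Ω → Vec d) (ε b : Ω → ℝ)
    (hxm : Measurable x) (hεm : Measurable ε) (hbm : Measurable b)
    (hxg : ∀ v : Vec d, Measure.map (fun ω => ⟪v, x ω⟫) P
        = gaussianReal 0 (Real.toNNReal ⟪v, Matrix.toEuclideanLin H v⟫))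
    (hεg : Measure.map ε P = gaussianReal 0 (Real.toNNReal (σ ^ 2)))
    (hbη : P {ω | b ω ≠ 0} = ENNReal.ofReal η)
    (hbi : Integrable b P)
    (hind1 : IndepFun x ε P)
    (hind2 : IndepFun (fun ω => (x ω, ε ω)) b P)
    {Ω₂ : Type} [MeasurableSpace Ω₂] (P₂ : Measure Ω₂) [IsProbabilityMeasure P₂]
    (Θ : Ω₂ → Vec d) (hΘ : Measurable Θ):
    ∫⁻ ω, ENNReal.ofReal ⟪Θ ω - θs, Matrix.toEuclideanLin H (Θ ω - θs)⟫ ∂P₂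
      ≤ ENNReal.ofReal (4 * σ / (1 - etaT P b σ)) *
          ∫⁻ ω, ENNReal.ofReal (fLoss P x ε b θs (Θ ω) - fLoss P x ε b θs θs) ∂P₂
        + ENNReal.ofReal (10 / (1 - etaT P b σ) ^ 2) *
          ∫⁻ ω, ENNReal.ofReal ((fLoss P x ε b θs (Θ ω) - fLoss P x ε b θs θs) ^ 2) ∂P₂ := by
  have hA := (one_sub_etaT_pos hbm.aemeasurable σ (P := P)).le
  refine (stmt14_general ⟨hH.posSemidef, hxm, hεm, hbm, hxg, hεg, hbi, hind1, hind2⟩ hσ θs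
    hΘ.aemeasurable).trans ?_
  gcongr
  exacts [sqrt_two_mul_pi_le_four, by linarith [pi_le_four]]
end
end

section
/- For every z ≥ 0 one has |α(z) − α(0)| ≤ 20·ln(2/(1−η))·(z/σ)·α(z). -/
open MeasureTheory ProbabilityTheory Real
open scoped RealInnerProductSpace ENNReal

noncomputable section

/-!
Up to the factor `√(2/π)`, `α(z)` is `r^(-1/2) M(r)` with `r = σ² + z²` and
`M(r) = E[exp (-b² / (2r))]`, a value of the moment generating function of `b²`. Put `s = z/σ`, so
that `r = (1 + s²) σ²`. Monotonicity gives `M(σ²) ≤ M(r)`, and Jensen's inequality for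
`w ↦ w ^ (1 + s²)` gives `M(r) ^ (1 + s²) ≤ M(σ²)`. As `M(r) ≥ P(b = 0)`, this yields
`P(b = 0) ^ s² ≤ α(0) / α(z) ≤ √(1 + s²)`. Finally `√(1 + s²) ≤ 1 + |s|`, and
`1 - p ^ s² ≤ |s| √(log (1/p))` because `1 - exp (-t²) ≤ |t|`.
-/

lemma one_sub_le_measureReal_eq_zero {Ω : Type*} {mΩ : MeasurableSpace Ω} {μ : Measure Ω}
    [IsProbabilityMeasure μ] {X : Ω → ℝ} (hX : AEMeasurable X μ) {η : ℝ}
    (hη : μ.real {ω | X ω ≠ 0} ≤ η) : 1 - η ≤ μ.real {ω | X ω = 0} := by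
  have hcompl : μ.real {ω | X ω ≠ 0} = 1 - μ.real {ω | X ω = 0} :=
    probReal_compl_eq_one_sub₀ (hX.nullMeasurable (measurableSet_singleton 0))
  linarith

section MomentGeneratingFunction

variable {Ω : Type*} {mΩ : MeasurableSpace Ω} {μ : Measure Ω} {X : Ω → ℝ} {s t : ℝ}

lemma integrable_exp_mul_of_nonneg_of_nonpos [IsFiniteMeasure μ] (hX : AEMeasurable X μ)
    (hX0 : 0 ≤ᵐ[μ] X) (ht : t ≤ 0) : Integrable (fun ω ↦ exp (t * X ω)) μ := by
  simpa using integrable_exp_mul_of_le (X := -X) (-t) 0 (neg_nonneg.mpr ht) hX.neg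
    (hX0.mono fun ω hω ↦ neg_nonpos.mpr hω)

lemma integrable_exp_mul_sq_of_nonpos [IsFiniteMeasure μ] (hX : AEMeasurable X μ) (ht : t ≤ 0) :
    Integrable (fun ω ↦ exp (t * (X ^ 2) ω)) μ :=
  integrable_exp_mul_of_nonneg_of_nonpos (hX.pow_const 2) (ae_of_all _ fun ω ↦ sq_nonneg (X ω)) ht

lemma mgf_le_mgf_of_le_of_nonneg (hX0 : 0 ≤ᵐ[μ] X) (hst : s ≤ t)
    (ht : Integrable (fun ω ↦ exp (t * X ω)) μ) : mgf X μ s ≤ mgf X μ t :=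
  integral_mono_of_nonneg (ae_of_all _ fun _ ↦ (exp_pos _).le) ht
    (hX0.mono fun _ hω ↦ exp_le_exp.mpr (mul_le_mul_of_nonneg_right hst hω))

lemma measureReal_eq_zero_le_mgf [IsFiniteMeasure μ]
    (ht : Integrable (fun ω ↦ exp (t * X ω)) μ) : μ.real {ω | X ω = 0} ≤ mgf X μ t :=
  calc μ.real {ω | X ω = 0}
      ≤ μ.real {ω | 1 ≤ exp (t * X ω)} := measureReal_mono fun ω (hω : X ω = 0) ↦ by simp [hω]
    _ ≤ mgf X μ t := by
      simpa only [mgf, one_mul] using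
        mul_meas_ge_le_integral_of_nonneg (ae_of_all _ fun ω ↦ (exp_pos (t * X ω)).le) ht 1

lemma mgf_rpow_le_mgf_mul [IsProbabilityMeasure μ] {p : ℝ} (hp : 1 ≤ p)
    (ht : Integrable (fun ω ↦ exp (t * X ω)) μ)
    (hpt : Integrable (fun ω ↦ exp (p * t * X ω)) μ) :
    mgf X μ t ^ p ≤ mgf X μ (p * t) := by
  have exp_rpow (ω : Ω) : exp (t * X ω) ^ p = exp (p * t * X ω) := by
    rw [← exp_mul]; ring_nf
  have jensen := (convexOn_rpow hp).map_integral_le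
    (continuousOn_id.rpow_const fun _ _ ↦ .inr (by linarith)) isClosed_Ici
    (ae_of_all μ fun ω ↦ (exp_pos (t * X ω)).le) ht
    (by simpa only [Function.comp_def, exp_rpow] using hpt)
  simpa only [mgf, exp_rpow] using jensen

end MomentGeneratingFunction

section RealInequalities

lemma one_sub_exp_neg_sq_le_abs (t : ℝ) : 1 - exp (-t ^ 2) ≤ |t| := by
  have hexp : exp (-t ^ 2) ≤ 1 := exp_le_one_iff.mpr (neg_nonpos.mpr (sq_nonneg t))
  refine le_of_abs_le (sq_le_sq.mp ?_)
  calc (1 - exp (-t ^ 2)) ^ 2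
      ≤ 1 - exp (-t ^ 2) :=
        pow_le_of_le_one (sub_nonneg.mpr hexp) (sub_le_self 1 (exp_pos _).le) two_ne_zero
    _ ≤ t ^ 2 := by linarith [one_sub_le_exp_neg (t ^ 2)]

lemma one_sub_rpow_sq_le {p : ℝ} (hp0 : 0 < p) (hp1 : p ≤ 1) (s : ℝ) :
    1 - p ^ s ^ 2 ≤ |s| * √(-log p) := by
  have hlog : 0 ≤ -log p := neg_nonneg.mpr (log_nonpos hp0.le hp1)
  have h := one_sub_exp_neg_sq_le_abs (s * √(-log p))
  rw [abs_mul, abs_of_nonneg (sqrt_nonneg _), mul_pow, sq_sqrt hlog] at h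
  rw [rpow_def_of_pos hp0]
  convert h using 3
  ring

lemma max_one_sqrt_neg_log_one_sub_le {η : ℝ} (hη0 : 0 ≤ η) (hη1 : η < 1) :
    max 1 (√(-log (1 - η))) ≤ 20 * log (2 / (1 - η)) := by
  have hlog : log (1 - η) ≤ 0 := log_nonpos (by linarith) (by linarith)
  rw [log_div two_ne_zero (by linarith)]
  refine max_le (by linarith [log_two_gt_d9]) (sqrt_le_iff.mpr ⟨?_, ?_⟩) <;>
    nlinarith [log_two_gt_d9]

end RealInequalities

section Alpha

variable {Ω : Type} [MeasurableSpace Ω] {P : Measure Ω} {b : Ω → ℝ} {σ : ℝ}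

lemma alphaF_nonneg (z : ℝ) : 0 ≤ alphaF P b σ z :=
  mul_nonneg (by positivity) (integral_nonneg fun _ ↦ (exp_pos _).le)

lemma alphaF_eq_mgf (z : ℝ) :
    alphaF P b σ z =
      √(2 / π) * (√(σ ^ 2 + z ^ 2))⁻¹ * mgf (b ^ 2) P (-(2 * (σ ^ 2 + z ^ 2))⁻¹) := by
  simp only [alphaF, mgf, Pi.pow_apply, div_eq_inv_mul, mul_neg, neg_mul]

lemma alphaF_zero_eq_mgf (hσ : 0 < σ) :
    alphaF P b σ 0 = √(2 / π) * σ⁻¹ * mgf (b ^ 2) P (-(2 * σ ^ 2)⁻¹) := by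
  simpa [sqrt_sq hσ.le] using alphaF_eq_mgf (P := P) (b := b) (σ := σ) 0

lemma alphaF_zero_le_sqrt_mul_alphaF [IsFiniteMeasure P] (hb : AEMeasurable b P)
    (hσ : 0 < σ) (z : ℝ) :
    alphaF P b σ 0 ≤ √(1 + (z / σ) ^ 2) * alphaF P b σ z := by
  have hmgf : mgf (b ^ 2) P (-(2 * σ ^ 2)⁻¹) ≤ mgf (b ^ 2) P (-(2 * (σ ^ 2 + z ^ 2))⁻¹) := by
    refine mgf_le_mgf_of_le_of_nonneg (ae_of_all _ fun ω ↦ sq_nonneg (b ω)) ?_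
      (integrable_exp_mul_sq_of_nonpos hb (neg_nonpos.mpr (by positivity)))
    gcongr
    exact le_add_of_nonneg_right (sq_nonneg z)
  have hscale : √(1 + (z / σ) ^ 2) * (√(σ ^ 2 + z ^ 2))⁻¹ = σ⁻¹ := by
    have : σ ^ 2 + z ^ 2 = (1 + (z / σ) ^ 2) * σ ^ 2 := by field_simp
    rw [this, sqrt_mul (by positivity), sqrt_sq hσ.le]
    field_simp
  rw [alphaF_zero_eq_mgf hσ, alphaF_eq_mgf z, ← hscale]
  calc √(2 / π) * (√(1 + (z / σ) ^ 2) * (√(σ ^ 2 + z ^ 2))⁻¹) * mgf (b ^ 2) P (-(2 * σ ^ 2)⁻¹)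
      ≤ √(2 / π) * (√(1 + (z / σ) ^ 2) * (√(σ ^ 2 + z ^ 2))⁻¹) *
          mgf (b ^ 2) P (-(2 * (σ ^ 2 + z ^ 2))⁻¹) := by gcongr
    _ = √(1 + (z / σ) ^ 2) * (√(2 / π) * (√(σ ^ 2 + z ^ 2))⁻¹ *
          mgf (b ^ 2) P (-(2 * (σ ^ 2 + z ^ 2))⁻¹)) := by ring

lemma alphaF_zero_sub_alphaF_le [IsFiniteMeasure P] (hb : AEMeasurable b P)
    (hσ : 0 < σ) (z : ℝ) :
    alphaF P b σ 0 - alphaF P b σ z ≤ |z / σ| * alphaF P b σ z := by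
  have hα := alphaF_nonneg (P := P) (b := b) (σ := σ) z
  have hsqrt : √(1 + (z / σ) ^ 2) ≤ 1 + |z / σ| := by
    simpa only [norm_eq_abs, sq_abs] using sqrt_one_add_norm_sq_le (z / σ)
  linarith [alphaF_zero_le_sqrt_mul_alphaF hb hσ z, mul_le_mul_of_nonneg_right hsqrt hα]

lemma alphaF_mul_rpow_le_alphaF_zero [IsProbabilityMeasure P] (hb : AEMeasurable b P)
    (hσ : 0 < σ) (z : ℝ) :
    alphaF P b σ z * P.real {ω | b ω = 0} ^ (z / σ) ^ 2 ≤ alphaF P b σ 0 := by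
  have hr : -(2 * (σ ^ 2 + z ^ 2))⁻¹ ≤ 0 := neg_nonpos.mpr (by positivity)
  have hint := integrable_exp_mul_sq_of_nonpos hb hr
  have hscale : (1 + (z / σ) ^ 2) * -(2 * (σ ^ 2 + z ^ 2))⁻¹ = -(2 * σ ^ 2)⁻¹ := by field_simp
  have hjensen : mgf (b ^ 2) P (-(2 * (σ ^ 2 + z ^ 2))⁻¹) ^ (1 + (z / σ) ^ 2) ≤
      mgf (b ^ 2) P (-(2 * σ ^ 2)⁻¹) := by
    rw [← hscale]
    exact mgf_rpow_le_mgf_mul (le_add_of_nonneg_right (sq_nonneg _)) hint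
      (integrable_exp_mul_sq_of_nonpos hb (mul_nonpos_of_nonneg_of_nonpos (by positivity) hr))
  have hmass : P.real {ω | b ω = 0} ≤ mgf (b ^ 2) P (-(2 * (σ ^ 2 + z ^ 2))⁻¹) := by
    simpa only [Pi.pow_apply, sq_eq_zero_iff] using measureReal_eq_zero_le_mgf hint
  have hpos : 0 < mgf (b ^ 2) P (-(2 * (σ ^ 2 + z ^ 2))⁻¹) := mgf_pos hint
  rw [alphaF_zero_eq_mgf hσ, alphaF_eq_mgf z]
  set m := mgf (b ^ 2) P (-(2 * (σ ^ 2 + z ^ 2))⁻¹)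
  calc √(2 / π) * (√(σ ^ 2 + z ^ 2))⁻¹ * m * P.real {ω | b ω = 0} ^ (z / σ) ^ 2
      ≤ √(2 / π) * (√(σ ^ 2 + z ^ 2))⁻¹ * m * m ^ (z / σ) ^ 2 := by gcongr
    _ = √(2 / π) * (√(σ ^ 2 + z ^ 2))⁻¹ * m ^ (1 + (z / σ) ^ 2) := by
      rw [rpow_add hpos, rpow_one, mul_assoc]
    _ ≤ √(2 / π) * σ⁻¹ * mgf (b ^ 2) P (-(2 * σ ^ 2)⁻¹) := by
      gcongr
      exact le_sqrt_of_sq_le (le_add_of_nonneg_right (sq_nonneg z))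

lemma alphaF_sub_alphaF_zero_le [IsProbabilityMeasure P] (hb : AEMeasurable b P)
    (hσ : 0 < σ) (hb0 : 0 < P.real {ω | b ω = 0}) (z : ℝ) :
    alphaF P b σ z - alphaF P b σ 0 ≤
      √(-log (P.real {ω | b ω = 0})) * |z / σ| * alphaF P b σ z := by
  have hα := alphaF_nonneg (P := P) (b := b) (σ := σ) z
  have h := mul_le_mul_of_nonneg_right (one_sub_rpow_sq_le hb0 measureReal_le_one (z / σ)) hα
  linarith [alphaF_mul_rpow_le_alphaF_zero hb hσ z]

end Alpha

theorem stmt15_general {Ω : Type} [MeasurableSpace Ω] {P : Measure Ω} [IsProbabilityMeasure P]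
    {b : Ω → ℝ} (hb : AEMeasurable b P) {σ η : ℝ} (hσ : 0 < σ) (hη1 : η < 1)
    (hbη : P.real {ω | b ω ≠ 0} ≤ η) (z : ℝ) :
    |alphaF P b σ z - alphaF P b σ 0| ≤
      max 1 (√(-log (1 - η))) * |z / σ| * alphaF P b σ z := by
  have hη : 0 < 1 - η := sub_pos.mpr hη1
  have hmass : 1 - η ≤ P.real {ω | b ω = 0} := one_sub_le_measureReal_eq_zero hb hbη
  have hα : 0 ≤ alphaF P b σ z := alphaF_nonneg z
  refine abs_sub_le_iff.mpr ⟨?_, ?_⟩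
  · refine (alphaF_sub_alphaF_zero_le hb hσ (hη.trans_le hmass) z).trans ?_
    gcongr
    exact le_max_of_le_right (by gcongr)
  · refine (alphaF_zero_sub_alphaF_le hb hσ z).trans ?_
    gcongr
    exact le_mul_of_one_le_left (abs_nonneg _) (le_max_left _ _)

theorem stmt15 {d : ℕ} (hd : 1 ≤ d)
    {Ω : Type} [MeasurableSpace Ω] (P : Measure Ω) [IsProbabilityMeasure P]
    (θs : Vec d) (H : Matrix (Fin d) (Fin d) ℝ) (hH : H.PosDef)
    (σ η : ℝ) (hσ : 0 < σ) (hη0 : 0 ≤ η) (hη1 : η < 1)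
    (x : Ω → Vec d) (ε b : Ω → ℝ)
    (hxm : Measurable x) (hεm : Measurable ε) (hbm : Measurable b)
    (hxg : ∀ v : Vec d, Measure.map (fun ω => ⟪v, x ω⟫) P
        = gaussianReal 0 (Real.toNNReal ⟪v, Matrix.toEuclideanLin H v⟫))
    (hεg : Measure.map ε P = gaussianReal 0 (Real.toNNReal (σ ^ 2)))
    (hbη : P {ω | b ω ≠ 0} = ENNReal.ofReal η)
    (hbi : Integrable b P)
    (hind1 : IndepFun x ε P)
    (hind2 : IndepFun (fun ω => (x ω, ε ω)) b P):
    ∀ z : ℝ, 0 ≤ z →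
      |alphaF P b σ z - alphaF P b σ 0| ≤
        20 * Real.log (2 / (1 - η)) * (z / σ) * alphaF P b σ z := by
  intro z hz
  have hbη' : P.real {ω | b ω ≠ 0} ≤ η := ENNReal.toReal_le_of_le_ofReal hη0 hbη.le
  have hs : |z / σ| = z / σ := abs_of_nonneg (div_nonneg hz hσ.le)
  refine (hs ▸ stmt15_general hbm.aemeasurable hσ hη1 hbη' z).trans ?_
  gcongr
  exacts [alphaF_nonneg z, max_one_sqrt_neg_log_one_sub_le hη0 hη1]
end
end

section
/- For every η ∈ [0,1) and every real u ≥ 0 one has u/(η + (1−η)·exp(u)) ≤ 9·ln(2/(1−η)). -/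
/-!
Let `D` be the denominator and `L = log (2 / (1 - η))`. The inequality `log x ≤ x - 1` at
`x = (1 - η) * exp u / 2` gives `u ≤ L + D / 2 - 1`. If `u ≥ 0`, then `D ≥ 1`, and since `L ≥ 1/2`
this bound is at most `L * D`; the factor `9` is not sharp, and `1` suffices.
-/

theorem le_log_div_add_mul_exp_div_sub_one {a c : ℝ} (ha : 0 < a) (hc : 0 < c) (u : ℝ) :
    u ≤ Real.log (c / a) + a * Real.exp u / c - 1 := by
  have log_eq : Real.log (a * Real.exp u / c) = u - Real.log (c / a) := by
    rw [Real.log_div (by positivity) hc.ne', Real.log_mul ha.ne' (Real.exp_ne_zero u),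
      Real.log_exp, Real.log_div hc.ne' ha.ne']
    ring
  have log_le : Real.log (a * Real.exp u / c) ≤ a * Real.exp u / c - 1 :=
    Real.log_le_sub_one_of_pos (by positivity)
  linarith

theorem one_le_add_one_sub_mul_exp {η u : ℝ} (hη : η ≤ 1) (hu : 0 ≤ u) :
    1 ≤ η + (1 - η) * Real.exp u := by
  have : 1 - η ≤ (1 - η) * Real.exp u :=
    le_mul_of_one_le_right (sub_nonneg.2 hη) (Real.one_le_exp hu)
  linarith

theorem half_lt_log_two_div {a : ℝ} (ha : 0 < a) (ha_one : a ≤ 1) :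
    1 / 2 < Real.log (2 / a) :=
  calc
    1 / 2 < Real.log 2 := by linarith [Real.log_two_gt_d9]
    _ ≤ Real.log (2 / a) :=
      Real.log_le_log two_pos (le_div_self zero_le_two ha ha_one)

theorem stmt16_general {η : ℝ} (hη : 0 ≤ η) (hη_lt : η < 1) (u : ℝ) :
    u / (η + (1 - η) * Real.exp u) ≤ Real.log (2 / (1 - η)) := by
  have one_sub_pos : 0 < 1 - η := sub_pos.2 hη_lt
  have half_lt_log := half_lt_log_two_div one_sub_pos (sub_le_self 1 hη)
  have denom_pos : 0 < η + (1 - η) * Real.exp u := by positivity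
  have u_le := le_log_div_add_mul_exp_div_sub_one one_sub_pos two_pos u
  set L := Real.log (2 / (1 - η))
  rcases le_total u 0 with hu | hu
  · exact (div_nonpos_of_nonpos_of_nonneg hu denom_pos.le).trans (by linarith)
  · have mul_exp_le : (1 - η) * Real.exp u ≤ η + (1 - η) * Real.exp u :=
      le_add_of_nonneg_left hη
    have one_le_denom := one_le_add_one_sub_mul_exp hη_lt.le hu
    rw [div_le_iff₀ denom_pos]
    set D := η + (1 - η) * Real.exp u
    calc
      u ≤ L + D / 2 - 1 := by linarith
      _ ≤ L * D - (L - 1 / 2) * (D - 1) := by linarith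
      _ ≤ L * D :=
        sub_le_self _ (mul_nonneg (sub_nonneg.2 half_lt_log.le) (sub_nonneg.2 one_le_denom))

theorem stmt16 : ∀ η : ℝ, 0 ≤ η → η < 1 → ∀ u : ℝ, 0 ≤ u →
    u / (η + (1 - η) * Real.exp u) ≤ 9 * Real.log (2 / (1 - η)) := by
  intro η hη hη_lt u _
  have := half_lt_log_two_div (sub_pos.2 hη_lt) (sub_le_self 1 hη)
  linarith [stmt16_general hη hη_lt u]
end

section
/- For every real x ≥ 0 one has ((√2 − 1)/√π)·exp(−x²) ≤ x·( erf(x/√2) − erf(x) ) + √(2/π)·exp(−x²/2) − (1/√π)·exp(−x²). -/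
/-!
For all real `a` and `b`, in either order, `∫ u in a..b, (u - a) * exp (-u ^ 2)` is nonnegative: on
the way from `a` to `b` the factor `u - a` has the sign of the orientation. The part with
`u * exp (-u ^ 2)` integrates explicitly and the other one is a difference of values of `erf`, so
that `a * (erf b - erf a) ≤ (exp (-a ^ 2) - exp (-b ^ 2)) / √π`. The claim is `√2` times this
inequality at `a = x / √2` and `b = x`.
-/

open Real

noncomputable section

open MeasureTheory Set

theorem apply_left_mul_integral_le_of_monotoneOn {f w : ℝ → ℝ} {a b : ℝ}
    (hf : MonotoneOn f (uIcc a b)) (hw : ∀ u ∈ uIcc a b, 0 ≤ w u)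
    (hwi : IntervalIntegrable w volume a b)
    (hfwi : IntervalIntegrable (fun u => f u * w u) volume a b) :
    f a * ∫ u in a..b, w u ≤ ∫ u in a..b, f u * w u := by
  rw [← intervalIntegral.integral_const_mul]
  rcases le_total a b with hab | hba
  · rw [uIcc_of_le hab] at hf hw
    exact intervalIntegral.integral_mono_on hab (hwi.const_mul _) hfwi fun u hu =>
      mul_le_mul_of_nonneg_right (hf (left_mem_Icc.2 hab) hu hu.1) (hw u hu)
  · rw [uIcc_of_ge hba] at hf hw
    rw [intervalIntegral.integral_symm b a, intervalIntegral.integral_symm b a, neg_le_neg_iff]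
    exact intervalIntegral.integral_mono_on hba hfwi.symm (hwi.symm.const_mul _) fun u hu =>
      mul_le_mul_of_nonneg_right (hf hu (right_mem_Icc.2 hba) hu.2) (hw u hu)

theorem integral_mul_exp_neg_sq (a b : ℝ) :
    ∫ u in a..b, u * exp (-u ^ 2) = (exp (-a ^ 2) - exp (-b ^ 2)) / 2 := by
  have hderiv (u : ℝ) : HasDerivAt (fun v => -exp (-v ^ 2) / 2) (u * exp (-u ^ 2)) u := by
    refine ((hasDerivAt_pow 2 u).fun_neg.exp.fun_neg.div_const 2).congr_deriv ?_
    push_cast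
    ring
  rw [intervalIntegral.integral_eq_sub_of_hasDerivAt (fun u _ => hderiv u)
    (Continuous.intervalIntegrable (by fun_prop) a b)]
  ring

theorem erf_sub_erf (a b : ℝ) :
    erf b - erf a = 2 / √π * ∫ u in a..b, exp (-u ^ 2) := by
  have hint (c : ℝ) : IntervalIntegrable (fun u => exp (-u ^ 2)) volume 0 c :=
    Continuous.intervalIntegrable (by fun_prop) 0 c
  rw [erf, erf, ← mul_sub, intervalIntegral.integral_interval_sub_left (hint b) (hint a)]

theorem mul_erf_sub_erf_le (a b : ℝ) :
    a * (erf b - erf a) ≤ (exp (-a ^ 2) - exp (-b ^ 2)) / √π := by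
  have hweighted : a * ∫ u in a..b, exp (-u ^ 2) ≤ ∫ u in a..b, u * exp (-u ^ 2) :=
    apply_left_mul_integral_le_of_monotoneOn (f := fun u => u) monotoneOn_id
      (fun u _ => (exp_pos _).le) (Continuous.intervalIntegrable (by fun_prop) a b)
      (Continuous.intervalIntegrable (by fun_prop) a b)
  calc a * (erf b - erf a)
      = 2 / √π * (a * ∫ u in a..b, exp (-u ^ 2)) := by rw [erf_sub_erf]; ring
    _ ≤ 2 / √π * ∫ u in a..b, u * exp (-u ^ 2) := by gcongr
    _ = (exp (-a ^ 2) - exp (-b ^ 2)) / √π := by rw [integral_mul_exp_neg_sq]; ring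

theorem stmt17_general (x : ℝ) :
    (√2 - 1) / √π * exp (-x ^ 2) ≤
      x * (erf (x / √2) - erf x) + √(2 / π) * exp (-x ^ 2 / 2) - 1 / √π * exp (-x ^ 2) := by
  have hsq : -(x / √2) ^ 2 = -x ^ 2 / 2 := by
    rw [div_pow, sq_sqrt zero_le_two, neg_div]
  have hscaled : x * (erf x - erf (x / √2)) ≤
      √2 * ((exp (-x ^ 2 / 2) - exp (-x ^ 2)) / √π) :=
    calc x * (erf x - erf (x / √2))
        = √2 * (x / √2 * (erf x - erf (x / √2))) := by field_simp
      _ ≤ √2 * ((exp (-x ^ 2 / 2) - exp (-x ^ 2)) / √π) := by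
        rw [← hsq]
        gcongr
        exact mul_erf_sub_erf_le (x / √2) x
  rw [sqrt_div zero_le_two]
  linear_combination hscaled

theorem stmt17 : ∀ x : ℝ, 0 ≤ x →
    (Real.sqrt 2 - 1) / Real.sqrt π * Real.exp (-x ^ 2) ≤
      x * (erf (x / Real.sqrt 2) - erf x)
        + Real.sqrt (2 / π) * Real.exp (-x ^ 2 / 2)
        - 1 / Real.sqrt π * Real.exp (-x ^ 2) :=
  fun x _ => stmt17_general x
end
end
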